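/- Let C be a singly even self-dual code of length n with shadow S. If it is not the case that n ≡ 22 (mod 24) and d(C) = 4⌊n/24⌋ + 6, then d(S) ≤ n/2 + 4 − 2·d(C); and if n ≡ 22 (mod 24) and d(C) = 4⌊n/24⌋ + 6, then d(S) = n/2 + 8 − 2·d(C). -/

import Mathlib

open Finset

/-- Hamming weight of a binary vector. -/
def wt {n : ℕ} (x : Fin n → ZMod 2) : ℕ := hammingNorm x

/-- The dual of a set of binary vectors with respect to the standard inner product. -/
def dualSet {n : ℕ} (C : Set (Fin n → ZMod 2)) : Set (Fin n → ZMod 2) :=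
  {x | ∀ y ∈ C, ∑ i, x i * y i = 0}

/-- A binary linear code is self-dual if it equals its dual code. -/
def IsSelfDual {n : ℕ} (C : Submodule (ZMod 2) (Fin n → ZMod 2)) : Prop :=
  (C : Set (Fin n → ZMod 2)) = dualSet (C : Set (Fin n → ZMod 2))

/-- A self-dual code is singly even if some codeword has weight not divisible by 4. -/
def IsSinglyEvenSelfDual {n : ℕ} (C : Submodule (ZMod 2) (Fin n → ZMod 2)) : Prop :=
  IsSelfDual C ∧ ∃ x ∈ C, ¬ (4 ∣ wt x)

/-- The doubly even subcode `C₀` of `C` (as a set): codewords of weight ≡ 0 (mod 4). -/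
def evenSub {n : ℕ} (C : Submodule (ZMod 2) (Fin n → ZMod 2)) : Set (Fin n → ZMod 2) :=
  {x | x ∈ C ∧ 4 ∣ wt x}

/-- The shadow `S = C₀^⊥ \ C` of a singly even self-dual code. -/
def shadow {n : ℕ} (C : Submodule (ZMod 2) (Fin n → ZMod 2)) : Set (Fin n → ZMod 2) :=
  dualSet (evenSub C) \ (C : Set (Fin n → ZMod 2))

/-- The minimum (nonzero) weight of a set of vectors. -/
noncomputable def minWtSet {n : ℕ} (S : Set (Fin n → ZMod 2)) : ℕ :=
  sInf {w | ∃ x ∈ S, x ≠ 0 ∧ wt x = w}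

/-- The minimum weight of a code. -/
noncomputable def minWt {n : ℕ} (C : Submodule (ZMod 2) (Fin n → ZMod 2)) : ℕ :=
  minWtSet (C : Set (Fin n → ZMod 2))

/-- A singly even self-dual code of length `n` is s-extremal if
`d(S) = n/2 + 4 - 2 d(C)`. -/
def IsSExtremal {n : ℕ} (C : Submodule (ZMod 2) (Fin n → ZMod 2)) : Prop :=
  IsSinglyEvenSelfDual C ∧
    (minWtSet (shadow C) : ℤ) = ((n / 2 : ℕ) : ℤ) + 4 - 2 * (minWt C : ℤ)

/-- Two codes are equivalent if one is obtained from the other by permuting coordinates. -/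
def CodeEquiv {n : ℕ} (C D : Submodule (ZMod 2) (Fin n → ZMod 2)) : Prop :=
  ∃ σ : Equiv.Perm (Fin n),
    Submodule.map (LinearMap.funLeft (ZMod 2) (ZMod 2) σ) C = D

/-- The neighbor `C₀ ∪ (t + C₀)` of `C` obtained from a shadow vector `t`:
the span of the doubly even subcode together with `t`. -/
def neighborCode {n : ℕ} (C : Submodule (ZMod 2) (Fin n → ZMod 2))
    (t : Fin n → ZMod 2) : Submodule (ZMod 2) (Fin n → ZMod 2) :=
  Submodule.span (ZMod 2) (evenSub C ∪ {t})

/-!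
Put `N = n / 2`. The MacWilliams transform expresses the weight distribution of the shadow `S`
through the signed enumerator `W(t) = ∑ u ∈ C, (-t) ^ (wt u / 2)`. Since the weights in `S` are
congruent to `N` modulo `4` and symmetric about `N`, the identity can be written as
`|C| p(64 t (1 + t) ^ 2 / (1 - t) ^ 4) = 2 ^ (n + 1) (1 - t) ^ (-N) W(t)`,
where `p` is a sum over `v ∈ S` of Dickson polynomials of degree `|N - wt v| / 4` in a variable for
which all their coefficients are positive. Hence `p_i ≠ 0` if and only if some shadow vector has
weight at most `N - 4 i`. If `d(C) ≥ 2 i + 2`, then `W ≡ 1` modulo `t ^ (i + 1)`, and Lagrange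
inversion makes `i p_i` a nonzero multiple of the coefficient of `t ^ (i - 1)` in
`(1 - t) ^ (4 i - N - 1) (1 + t) ^ (-2 i)`. That coefficient vanishes only for `N + 1 = 6 i` and `i`
even, which is the exceptional case `n ≡ 22` modulo `24`.
-/

section PowerSeriesCoefficients

open PowerSeries

lemma coeff_pow_mul_pos {R : Type*} [Semiring R] [PartialOrder R] [IsStrictOrderedRing R]
    {f g : R⟦X⟧} (hg : ∀ k, 0 ≤ coeff k g) (hg₀ : 0 < coeff 0 g) (hf : ∀ k, 0 < coeff k f)
    (m k : ℕ) : 0 < coeff k (g ^ m * f) := by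
  induction m generalizing k with
  | zero => simpa only [pow_zero, one_mul] using hf k
  | succ m ih =>
    rw [pow_succ', mul_assoc, coeff_mul]
    exact sum_pos' (fun p _ => mul_nonneg (hg p.1) (ih p.2).le)
      ⟨(0, k), by simp, mul_pos hg₀ (ih k)⟩

variable {K : Type*} [Field K]

lemma one_sub_X_mul_inv : (1 - X : K⟦X⟧) * (1 - X)⁻¹ = 1 :=
  PowerSeries.mul_inv_cancel _ (by simp)

lemma one_add_X_mul_inv : (1 + X : K⟦X⟧) * (1 + X)⁻¹ = 1 :=
  PowerSeries.mul_inv_cancel _ (by simp)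

lemma coeff_one_sub_X_inv (k : ℕ) : coeff k (1 - X : K⟦X⟧)⁻¹ = 1 := by
  rw [(inv_eq_iff_mul_eq_one (by simp)).2 (mk_one_mul_one_sub_eq_one K), coeff_mk, Pi.one_apply]

lemma evalNegHom_one_sub_X_inv : evalNegHom (1 - X : K⟦X⟧)⁻¹ = (1 + X)⁻¹ := by
  have h := congrArg evalNegHom (one_sub_X_mul_inv (K := K))
  rw [map_mul, map_sub, map_one, evalNegHom_X, sub_neg_eq_add, mul_comm] at h
  exact (eq_inv_iff_mul_eq_one (by simp)).2 h

lemma evalNegHom_one_add_X_inv : evalNegHom (1 + X : K⟦X⟧)⁻¹ = (1 - X)⁻¹ := by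
  have h := congrArg evalNegHom (one_add_X_mul_inv (K := K))
  rw [map_mul, map_add, map_one, evalNegHom_X, ← sub_eq_add_neg, mul_comm] at h
  exact (eq_inv_iff_mul_eq_one (by simp)).2 h

lemma one_sub_X_inv_mul_one_add_X_inv :
    (1 - X : K⟦X⟧)⁻¹ * (1 + X)⁻¹ = expand 2 two_ne_zero (1 - X)⁻¹ := by
  have h : expand 2 two_ne_zero ((1 - X : K⟦X⟧) * (1 - X)⁻¹) = 1 := by
    rw [one_sub_X_mul_inv, map_one]
  rw [map_mul, map_sub, map_one, expand_X] at h
  linear_combination (- (1 - X : K⟦X⟧)⁻¹ * (1 + X)⁻¹) * h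
    + expand 2 two_ne_zero (1 - X)⁻¹ *
      ((1 + X) * (1 + X)⁻¹ * one_sub_X_mul_inv (K := K) + one_add_X_mul_inv (K := K))

variable [LinearOrder K] [IsStrictOrderedRing K]

lemma coeff_one_sub_X_inv_pos (k : ℕ) : 0 < coeff k (1 - X : K⟦X⟧)⁻¹ := by
  rw [coeff_one_sub_X_inv]
  exact zero_lt_one

lemma coeff_one_sub_X_inv_mul_one_add_X_inv_nonneg (k : ℕ) :
    0 ≤ coeff k ((1 - X : K⟦X⟧)⁻¹ * (1 + X)⁻¹) := by
  rw [one_sub_X_inv_mul_one_add_X_inv, coeff_expand]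
  split_ifs
  · exact (coeff_one_sub_X_inv_pos _).le
  · exact le_rfl

lemma coeff_pow_mul_pow_mul_one_sub_X_inv_pos {g : K⟦X⟧} (hg : ∀ k, 0 ≤ coeff k g)
    (hg₀ : 0 < coeff 0 g) (m c k : ℕ) :
    0 < coeff k (g ^ m * (((1 - X)⁻¹ * (1 + X)⁻¹) ^ c * (1 - X)⁻¹)) :=
  coeff_pow_mul_pos hg hg₀ (coeff_pow_mul_pos coeff_one_sub_X_inv_mul_one_add_X_inv_nonneg
    (by simp) coeff_one_sub_X_inv_pos c) m k

lemma coeff_one_sub_X_inv_mul_one_add_X_inv_pow_eq_zero_iff (c k : ℕ) :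
    coeff k (((1 - X : K⟦X⟧)⁻¹ * (1 + X)⁻¹) ^ (c + 1)) = 0 ↔ Odd k := by
  have hpos (j : ℕ) : 0 < coeff j ((1 - X : K⟦X⟧)⁻¹ ^ c * (1 - X)⁻¹) :=
    coeff_pow_mul_pos (fun i => (coeff_one_sub_X_inv_pos i).le) (coeff_one_sub_X_inv_pos 0)
      coeff_one_sub_X_inv_pos c j
  rw [one_sub_X_inv_mul_one_add_X_inv, ← map_pow, pow_succ, coeff_expand,
    ite_eq_right_iff, ← Nat.not_even_iff_odd, even_iff_two_dvd]
  exact imp_congr_right fun _ => iff_false_intro (hpos _).ne'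

lemma coeff_one_sub_X_pow_mul_pow_mul_one_add_X_inv_ne_zero (m c k : ℕ) :
    coeff k ((1 - X : K⟦X⟧) ^ m * (((1 - X)⁻¹ * (1 + X)⁻¹) ^ c * (1 + X)⁻¹)) ≠ 0 := by
  set f : K⟦X⟧ := (1 - X) ^ m * (((1 - X)⁻¹ * (1 + X)⁻¹) ^ c * (1 + X)⁻¹) with hf
  have hneg : evalNegHom f = (1 + X) ^ m * (((1 - X)⁻¹ * (1 + X)⁻¹) ^ c * (1 - X)⁻¹) := by
    simp only [hf, map_mul, map_pow, map_sub, map_one, evalNegHom_X, evalNegHom_one_sub_X_inv,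
      evalNegHom_one_add_X_inv, sub_neg_eq_add, mul_comm (1 + X : K⟦X⟧)⁻¹]
  have hpos : 0 < coeff k (evalNegHom f) := by
    rw [hneg]
    refine coeff_pow_mul_pow_mul_one_sub_X_inv_pos (fun j => ?_) (by simp) m c k
    rw [map_add, coeff_one, coeff_X]
    positivity
  rw [evalNegHom, coeff_rescale] at hpos
  exact right_ne_zero_of_mul hpos.ne'

theorem coeff_one_sub_X_pow_mul_inv_pow_eq_zero_iff (a b c k : ℕ) :
    coeff k ((1 - X : K⟦X⟧) ^ a * (1 - X)⁻¹ ^ b * (1 + X)⁻¹ ^ (c + 1)) = 0 ↔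
      b = a + c + 1 ∧ Odd k := by
  have hcancel (m : ℕ) : (1 - X : K⟦X⟧) ^ m * (1 - X)⁻¹ ^ m = 1 := by
    rw [← mul_pow, one_sub_X_mul_inv, one_pow]
  rcases lt_trichotomy b (a + c + 1) with hb | rfl | hb
  · obtain ⟨m, hm⟩ : ∃ m, a + c = b + m := ⟨a + c - b, by omega⟩
    have hfactor : (1 - X : K⟦X⟧) ^ a * (1 - X)⁻¹ ^ b * (1 + X)⁻¹ ^ (c + 1)
        = (1 - X) ^ m * (((1 - X)⁻¹ * (1 + X)⁻¹) ^ c * (1 + X)⁻¹) := by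
      have hpow : (1 - X : K⟦X⟧) ^ a * (1 - X) ^ c = (1 - X) ^ b * (1 - X) ^ m := by
        rw [← pow_add, hm, pow_add]
      rw [mul_pow, pow_succ]
      linear_combination (-(1 - X : K⟦X⟧) ^ a * (1 - X)⁻¹ ^ b * (1 + X)⁻¹ ^ c * (1 + X)⁻¹)
        * hcancel c + (1 - X)⁻¹ ^ b * (1 - X)⁻¹ ^ c * (1 + X)⁻¹ ^ c * (1 + X)⁻¹ * hpow
        + (1 - X) ^ m * (1 - X)⁻¹ ^ c * (1 + X)⁻¹ ^ c * (1 + X)⁻¹ * hcancel b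
    rw [hfactor]
    exact iff_of_false (coeff_one_sub_X_pow_mul_pow_mul_one_add_X_inv_ne_zero m c k)
      fun h => hb.ne h.1
  · have hfactor : (1 - X : K⟦X⟧) ^ a * (1 - X)⁻¹ ^ (a + c + 1) * (1 + X)⁻¹ ^ (c + 1)
        = ((1 - X)⁻¹ * (1 + X)⁻¹) ^ (c + 1) := by
      rw [add_assoc, pow_add, ← mul_assoc, hcancel, one_mul, mul_pow]
    rw [hfactor, coeff_one_sub_X_inv_mul_one_add_X_inv_pow_eq_zero_iff, eq_self, true_and]
  · obtain ⟨m, rfl⟩ : ∃ m, b = a + (m + (c + 1) + 1) := ⟨b - (a + c + 1) - 1, by omega⟩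
    have hfactor : (1 - X : K⟦X⟧) ^ a * (1 - X)⁻¹ ^ (a + (m + (c + 1) + 1)) * (1 + X)⁻¹ ^ (c + 1)
        = (1 - X)⁻¹ ^ m * (((1 - X)⁻¹ * (1 + X)⁻¹) ^ (c + 1) * (1 - X)⁻¹) := by
      rw [pow_add _ a, ← mul_assoc, hcancel, one_mul, mul_pow]
      ring
    have hpos := coeff_pow_mul_pow_mul_one_sub_X_inv_pos (K := K)
      (fun j => (coeff_one_sub_X_inv_pos j).le) (coeff_one_sub_X_inv_pos 0) m (c + 1) k
    rw [hfactor]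
    exact iff_of_false hpos.ne' fun h => hb.ne' h.1

end PowerSeriesCoefficients

section LagrangeInversion

open PowerSeries

lemma coeff_derivative_mul_eq_zero_of_X_pow_dvd {R : Type*} [CommSemiring R] {f : R⟦X⟧} {k : ℕ}
    (hf : X ^ (k + 2) ∣ f) (g : R⟦X⟧) : coeff k (d⁄dX R f * g) = 0 := by
  have hdvd : X ^ (k + 1) ∣ d⁄dX R f := X_pow_dvd_iff.2 fun m hm => by
    rw [coeff_derivative, X_pow_dvd_iff.1 hf (m + 1) (by omega), zero_mul]
  exact X_pow_dvd_iff.1 (hdvd.mul_right g) k (Nat.lt_succ_self k)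

variable {K : Type*} [Field K] [CharZero K]

lemma coeff_inv_pow_mul_one_add_X_mul_derivative (g : K⟦X⟧) (m : ℕ) :
    coeff m (g⁻¹ ^ m * (1 + X * d⁄dX K g * g⁻¹)) = if m = 0 then 1 else 0 := by
  rcases m with _ | m
  · simp
  have hderiv : ((m + 1 : ℕ) : K⟦X⟧) * (g⁻¹ ^ (m + 1) * (1 + X * d⁄dX K g * g⁻¹))
      = ((m + 1 : ℕ) : K⟦X⟧) * g⁻¹ ^ (m + 1) - X * d⁄dX K (g⁻¹ ^ (m + 1)) := by
    rw [derivative_pow, derivative_inv', Nat.add_sub_cancel]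
    ring
  have hcoeff := congrArg (coeff (m + 1)) hderiv
  rw [← map_natCast (PowerSeries.C (R := K)), map_sub, coeff_C_mul, coeff_C_mul, coeff_succ_X_mul,
    coeff_derivative, Nat.cast_succ, mul_comm (coeff _ _) (_ + 1 : K), sub_self] at hcoeff
  rw [if_neg (Nat.succ_ne_zero m)]
  exact (mul_eq_zero.1 hcoeff).resolve_left (Nat.cast_add_one_ne_zero m)

lemma coeff_derivative_pow_mul_inv_pow {g : K⟦X⟧} (hg : constantCoeff g ≠ 0) (j k : ℕ) :
    coeff k (d⁄dX K ((X * g) ^ j) * g⁻¹ ^ (k + 1)) = if j = k + 1 then (k + 1 : K) else 0 := by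
  have hinv : g * g⁻¹ = 1 := PowerSeries.mul_inv_cancel g hg
  rcases j with _ | l
  · simp
  rcases lt_or_ge k l with hkl | hlk
  · rw [if_neg (by omega)]
    refine coeff_derivative_mul_eq_zero_of_X_pow_dvd ?_ _
    exact (pow_dvd_pow X (by omega)).trans (pow_dvd_pow_of_dvd (dvd_mul_right X g) (l + 1))
  obtain ⟨m, rfl⟩ := Nat.exists_eq_add_of_le hlk
  have hfactor : d⁄dX K ((X * g) ^ (l + 1)) * g⁻¹ ^ (l + m + 1)
      = PowerSeries.C (l + 1 : K) * (X ^ l * (g⁻¹ ^ m * (1 + X * d⁄dX K g * g⁻¹))) := by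
    calc d⁄dX K ((X * g) ^ (l + 1)) * g⁻¹ ^ (l + m + 1)
        = PowerSeries.C (l + 1 : K) * (X ^ l * (g⁻¹ ^ m * (g * g⁻¹ + X * d⁄dX K g * g⁻¹)))
          * (g * g⁻¹) ^ l := by
          rw [derivative_pow, Derivation.leibniz, derivative_X, Nat.add_sub_cancel]
          simp only [smul_eq_mul, map_add, map_natCast, map_one, Nat.cast_succ]
          ring
      _ = _ := by rw [hinv, one_pow, mul_one]
  rw [hfactor, coeff_C_mul, add_comm l m, coeff_X_pow_mul,
    coeff_inv_pow_mul_one_add_X_mul_derivative]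
  rcases m with _ | m
  · simp
  · rw [if_neg (by omega), if_neg (by omega), mul_zero]

theorem coeff_derivative_aeval_mul_inv_pow {g : K⟦X⟧} (hg : constantCoeff g ≠ 0)
    (p : Polynomial K) (k : ℕ) :
    coeff k (d⁄dX K (Polynomial.aeval (X * g) p) * g⁻¹ ^ (k + 1))
      = (k + 1) * p.coeff (k + 1) := by
  induction p using Polynomial.induction_on' with
  | add p q hp hq => rw [map_add, map_add, add_mul, map_add, hp, hq, Polynomial.coeff_add, mul_add]
  | monomial j a =>
    rw [Polynomial.aeval_monomial, ← Algebra.smul_def, Derivation.map_smul, smul_mul_assoc,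
      map_smul, coeff_derivative_pow_mul_inv_pow hg, Polynomial.coeff_monomial, smul_eq_mul,
      mul_ite, mul_ite, mul_zero, mul_zero, mul_comm a]

end LagrangeInversion

section BinaryVectors

lemma zmod_two_eq_one_of_ne_zero {a : ZMod 2} (ha : a ≠ 0) : a = 1 := Fin.eq_one_of_ne_zero a ha

variable {n : ℕ}

lemma wt_eq_sum_val (x : Fin n → ZMod 2) : wt x = ∑ i, (x i).val := by
  have hval (a : ZMod 2) : (if a ≠ 0 then 1 else 0) = a.val := by revert a; decide
  simp only [wt, hammingNorm, card_filter, hval]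

lemma wt_le (x : Fin n → ZMod 2) : wt x ≤ n :=
  hammingNorm_le_card_fintype.trans_eq (Fintype.card_fin n)

lemma natCast_wt (x : Fin n → ZMod 2) : (wt x : ZMod 2) = x ⬝ᵥ 1 := by
  simp only [wt_eq_sum_val, Nat.cast_sum, ZMod.natCast_val, ZMod.cast_id', id_eq, dotProduct_one]

lemma natCast_wt_mul (x y : Fin n → ZMod 2) : (wt (x * y) : ZMod 2) = x ⬝ᵥ y := by
  rw [natCast_wt, dotProduct_one]
  rfl

lemma dotProduct_self_eq_natCast_wt (x : Fin n → ZMod 2) : x ⬝ᵥ x = (wt x : ZMod 2) := by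
  have hsq (a : ZMod 2) : a * a = a := by revert a; decide
  rw [← natCast_wt_mul, show x * x = x from funext fun i => hsq (x i)]

lemma wt_add (x y : Fin n → ZMod 2) : wt (x + y) + 2 * wt (x * y) = wt x + wt y := by
  have hval (a b : ZMod 2) : (a + b).val + 2 * (a * b).val = a.val + b.val := by
    revert a b; decide
  simp only [wt_eq_sum_val, mul_sum, ← sum_add_distrib, Pi.add_apply, Pi.mul_apply, hval]

lemma wt_one : wt (1 : Fin n → ZMod 2) = n := by
  rw [wt_eq_sum_val]
  exact (sum_const 1).trans (by simp)

lemma wt_add_one_add_wt (x : Fin n → ZMod 2) : wt (x + 1) + wt x = n := by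
  have h := wt_add x 1
  rw [mul_one, wt_one] at h
  omega

lemma minWtSet_le {S : Set (Fin n → ZMod 2)} {x : Fin n → ZMod 2} (hx : x ∈ S) (hx₀ : x ≠ 0) :
    minWtSet S ≤ wt x :=
  Nat.sInf_le ⟨x, hx, hx₀, rfl⟩

lemma exists_wt_eq_minWtSet {S : Set (Fin n → ZMod 2)} {x : Fin n → ZMod 2} (hx : x ∈ S)
    (hx₀ : x ≠ 0) : ∃ y ∈ S, y ≠ 0 ∧ wt y = minWtSet S :=
  Nat.sInf_mem (s := {w | ∃ y ∈ S, y ≠ 0 ∧ wt y = w}) ⟨wt x, x, hx, hx₀, rfl⟩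

end BinaryVectors

section SelfDualCodes

variable {n : ℕ} {C : Submodule (ZMod 2) (Fin n → ZMod 2)}

lemma IsSelfDual.mem_iff (hC : IsSelfDual C) {x : Fin n → ZMod 2} :
    x ∈ C ↔ ∀ y ∈ C, x ⬝ᵥ y = 0 :=
  Set.ext_iff.1 (show (C : Set (Fin n → ZMod 2)) = dualSet C from hC) x

lemma IsSelfDual.two_dvd_wt (hC : IsSelfDual C) {x : Fin n → ZMod 2} (hx : x ∈ C) :
    2 ∣ wt x := by
  rw [← ZMod.natCast_eq_zero_iff, ← dotProduct_self_eq_natCast_wt]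
  exact hC.mem_iff.1 hx x hx

lemma IsSelfDual.one_mem (hC : IsSelfDual C) : 1 ∈ C :=
  hC.mem_iff.2 fun y hy => by
    rw [dotProduct_comm, ← natCast_wt, ZMod.natCast_eq_zero_iff]
    exact hC.two_dvd_wt hy

lemma IsSelfDual.two_dvd_length (hC : IsSelfDual C) : 2 ∣ n :=
  (wt_one (n := n)) ▸ hC.two_dvd_wt hC.one_mem

/-- Half the Hamming weight, modulo 2. On a self-dual code it is an additive functional whose
kernel is the doubly even subcode. -/
def halfWt (x : Fin n → ZMod 2) : ZMod 2 := (wt x / 2 : ℕ)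

lemma IsSelfDual.halfWt_add (hC : IsSelfDual C) {x y : Fin n → ZMod 2} (hx : x ∈ C)
    (hy : y ∈ C) : halfWt (x + y) = halfWt x + halfWt y := by
  have hxy : 2 ∣ wt (x * y) := by
    rw [← ZMod.natCast_eq_zero_iff, natCast_wt_mul]
    exact hC.mem_iff.1 hx y hy
  have hadd := wt_add x y
  have hx₂ := hC.two_dvd_wt hx
  have hy₂ := hC.two_dvd_wt hy
  rw [halfWt, halfWt, halfWt, ← Nat.cast_add, ZMod.natCast_eq_natCast_iff']
  omega

lemma IsSelfDual.halfWt_eq_zero_iff (hC : IsSelfDual C) {x : Fin n → ZMod 2} (hx : x ∈ C) :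
    halfWt x = 0 ↔ 4 ∣ wt x := by
  have hx₂ := hC.two_dvd_wt hx
  rw [halfWt, ZMod.natCast_eq_zero_iff]
  omega

lemma ne_zero_of_mem_shadow {v : Fin n → ZMod 2} (hv : v ∈ shadow C) : v ≠ 0 := by
  rintro rfl
  exact hv.2 C.zero_mem

lemma IsSinglyEvenSelfDual.length_pos (hC : IsSinglyEvenSelfDual C) : 0 < n := by
  obtain ⟨-, x, -, hx⟩ := hC
  refine (Nat.pos_of_ne_zero ?_).trans_le (wt_le x)
  rintro h
  exact hx (h ▸ dvd_zero 4)

lemma IsSinglyEvenSelfDual.mem_shadow_iff (hC : IsSinglyEvenSelfDual C) {v : Fin n → ZMod 2} :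
    v ∈ shadow C ↔ ∀ u ∈ C, v ⬝ᵥ u = halfWt u := by
  obtain ⟨hC, x, hx, hx₄⟩ := hC
  refine ⟨fun ⟨hv₀, hv⟩ u hu => ?_, fun hv => ⟨fun u hu => ?_, fun hvC => hx₄ ?_⟩⟩
  · by_cases hu₄ : 4 ∣ wt u
    · exact (hv₀ u ⟨hu, hu₄⟩).trans ((hC.halfWt_eq_zero_iff hu).2 hu₄).symm
    obtain ⟨y, hy, hvy⟩ : ∃ y ∈ C, v ⬝ᵥ y ≠ 0 := by
      rw [SetLike.mem_coe, hC.mem_iff] at hv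
      push Not at hv
      exact hv
    have hhu : halfWt u = 1 := zmod_two_eq_one_of_ne_zero (mt (hC.halfWt_eq_zero_iff hu).1 hu₄)
    have hhy : halfWt y = 1 :=
      zmod_two_eq_one_of_ne_zero (mt (hC.halfWt_eq_zero_iff hy).1 fun hy₄ => hvy (hv₀ y ⟨hy, hy₄⟩))
    have huy : 4 ∣ wt (u + y) := by
      rw [← hC.halfWt_eq_zero_iff (C.add_mem hu hy), hC.halfWt_add hu hy, hhu, hhy]
      rfl
    have hvuy : v ⬝ᵥ (u + y) = 0 := hv₀ _ ⟨C.add_mem hu hy, huy⟩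
    rw [dotProduct_add, zmod_two_eq_one_of_ne_zero hvy, CharTwo.add_eq_zero] at hvuy
    rw [hvuy, hhu]
  · exact (hv u hu.1).trans ((hC.halfWt_eq_zero_iff hu.1).2 hu.2)
  · rw [← hC.halfWt_eq_zero_iff hx, ← hv x hx]
    exact hC.mem_iff.1 hvC x hx

lemma IsSinglyEvenSelfDual.add_one_mem_shadow (hC : IsSinglyEvenSelfDual C)
    {v : Fin n → ZMod 2} (hv : v ∈ shadow C) : v + 1 ∈ shadow C :=
  hC.mem_shadow_iff.2 fun u hu => by
    rw [add_dotProduct, hC.mem_shadow_iff.1 hv u hu, hC.1.mem_iff.1 hC.1.one_mem u hu, add_zero]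

lemma IsSinglyEvenSelfDual.wt_mod_four_eq_of_mem_shadow (hC : IsSinglyEvenSelfDual C)
    {v w : Fin n → ZMod 2} (hv : v ∈ shadow C) (hw : w ∈ shadow C) : wt v % 4 = wt w % 4 := by
  have hvw : v + w ∈ C := hC.1.mem_iff.2 fun u hu => by
    rw [add_dotProduct, hC.mem_shadow_iff.1 hv u hu, hC.mem_shadow_iff.1 hw u hu,
      CharTwo.add_self_eq_zero]
  have hhalf := hC.mem_shadow_iff.1 hv _ hvw
  rw [← natCast_wt_mul, halfWt, ZMod.natCast_eq_natCast_iff'] at hhalf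
  have hadd := wt_add v (v + w)
  rw [← add_assoc, ZModModule.add_self, zero_add] at hadd
  have heven := hC.1.two_dvd_wt hvw
  omega

end SelfDualCodes

section MacWilliams

variable {n : ℕ} {C : Submodule (ZMod 2) (Fin n → ZMod 2)} {R : Type*} [CommRing R]

/-- The character `a ↦ (-1) ^ a` of `ZMod 2` with values in `R`. -/
def signChar (R : Type*) [CommRing R] : AddChar (ZMod 2) R := AddChar.zmodChar 2 neg_one_sq

lemma signChar_natCast (k : ℕ) : signChar R k = (-1) ^ k := AddChar.zmodChar_apply' _ k

lemma signChar_eq_one_iff [CharZero R] {a : ZMod 2} : signChar R a = 1 ↔ a = 0 := by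
  have hsign : signChar R a = 1 ↔ a.val = 0 := by
    rw [← ZMod.natCast_zmod_val a, signChar_natCast, ZMod.natCast_zmod_val]
    fin_cases a
    · exact iff_of_true (pow_zero _) rfl
    · exact iff_of_false (by norm_num [ZMod.val]) one_ne_zero
  exact hsign.trans (ZMod.val_eq_zero a)

lemma prod_ite_eq_pow_wt (x y : R) (w : Fin n → ZMod 2) :
    ∏ i, (if w i = 0 then x else y) = x ^ (n - wt w) * y ^ wt w := by
  have hcard := card_filter_add_card_filter_not (s := univ) fun i => w i = 0
  rw [card_univ, Fintype.card_fin] at hcard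
  rw [prod_ite, prod_const, prod_const, wt, hammingNorm, Nat.eq_sub_of_add_eq hcard]

lemma signChar_sum {ι : Type*} (s : Finset ι) (f : ι → ZMod 2) :
    signChar R (∑ i ∈ s, f i) = ∏ i ∈ s, signChar R (f i) := by
  have h := map_prod (signChar R).toMonoidHom (fun i => Multiplicative.ofAdd (f i)) s
  rwa [← ofAdd_sum] at h

lemma sum_signChar_mul_ite (x y : R) (b : ZMod 2) :
    ∑ a : ZMod 2, signChar R (a * b) * (if a = 0 then x else y)
      = if b = 0 then x + y else x - y := by
  have hone : signChar R 1 = -1 := by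
    rw [← Nat.cast_one, signChar_natCast, pow_one]
  rw [show (univ : Finset (ZMod 2)) = {0, 1} from rfl, sum_pair zero_ne_one, zero_mul,
    AddChar.map_zero_eq_one, if_pos rfl, if_neg one_ne_zero, one_mul, one_mul]
  split_ifs with hb
  · rw [hb, AddChar.map_zero_eq_one, one_mul]
  · rw [zmod_two_eq_one_of_ne_zero hb, hone, neg_one_mul, sub_eq_add_neg]

lemma sum_signChar_dotProduct_mul_pow_wt (x y : R) (u : Fin n → ZMod 2) :
    ∑ w : Fin n → ZMod 2, signChar R (w ⬝ᵥ u) * (x ^ (n - wt w) * y ^ wt w)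
      = (x + y) ^ (n - wt u) * (x - y) ^ wt u := by
  simp only [← prod_ite_eq_pow_wt, ← sum_signChar_mul_ite, dotProduct, signChar_sum,
    ← prod_mul_distrib]
  rw [prod_univ_sum, Fintype.piFinset_univ]

/-- The additive functional `u ↦ wt u / 2 + w ⬝ᵥ u` modulo 2 on a self-dual code. It is trivial
exactly for the vectors `w` of the shadow. -/
def shadowFunctional (hC : IsSelfDual C) (w : Fin n → ZMod 2) : C →+ ZMod 2 :=
  AddMonoidHom.mk' (fun u => halfWt (u : Fin n → ZMod 2) + w ⬝ᵥ u) fun u v => by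
    rw [Submodule.coe_add, hC.halfWt_add u.2 v.2, dotProduct_add, add_add_add_comm]

lemma signChar_compAddMonoidHom_shadowFunctional_eq_zero_iff [CharZero R]
    (hC : IsSinglyEvenSelfDual C) {w : Fin n → ZMod 2} :
    (signChar R).compAddMonoidHom (shadowFunctional hC.1 w) = 0 ↔ w ∈ shadow C := by
  rw [hC.mem_shadow_iff, DFunLike.ext_iff, Subtype.forall]
  refine forall₂_congr fun u hu => signChar_eq_one_iff.trans ?_
  exact (CharTwo.add_eq_zero.trans eq_comm)

open Classical in
theorem macWilliams_shadow [IsDomain R] [CharZero R] (hC : IsSinglyEvenSelfDual C) (x y : R) :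
    Fintype.card C * ∑ v with v ∈ shadow C, x ^ (n - wt v) * y ^ wt v
      = ∑ u : C, (-1) ^ (wt (u : Fin n → ZMod 2) / 2) *
          ((x + y) ^ (n - wt (u : Fin n → ZMod 2)) * (x - y) ^ wt (u : Fin n → ZMod 2)) := by
  have hchar (w : Fin n → ZMod 2) :
      ∑ u : C, signChar R (wt (u : Fin n → ZMod 2) / 2 : ℕ) * signChar R (w ⬝ᵥ u)
        = if w ∈ shadow C then (Fintype.card C : R) else 0 := by
    simp only [← AddChar.map_add_eq_mul,
      ← signChar_compAddMonoidHom_shadowFunctional_eq_zero_iff (R := R) hC]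
    exact AddChar.sum_eq_ite ((signChar R).compAddMonoidHom (shadowFunctional hC.1 w))
  simp only [← sum_signChar_dotProduct_mul_pow_wt x y, ← signChar_natCast, mul_sum, sum_filter]
  rw [sum_comm]
  refine sum_congr rfl fun w _ => ?_
  simp only [← mul_assoc, ← sum_mul, hchar, ite_mul, zero_mul, mul_ite, mul_zero]

end MacWilliams

section ShadowWeights

variable {n : ℕ} {C : Submodule (ZMod 2) (Fin n → ZMod 2)}

lemma neg_one_pow_mul_one_add_I_pow_mul_one_sub_I_pow {n w : ℕ} (hw : 2 ∣ w) (hwn : w ≤ n) :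
    (-1 : ℂ) ^ (w / 2) * ((1 + Complex.I) ^ (n - w) * (1 - Complex.I) ^ w)
      = (1 + Complex.I) ^ n := by
  obtain ⟨k, rfl⟩ := hw
  have hI : (1 - Complex.I) ^ 2 = -1 * (1 + Complex.I) ^ 2 := by
    linear_combination 2 * Complex.I_sq
  rw [Nat.mul_div_cancel_left k two_pos, pow_mul (1 - Complex.I), hI, mul_pow, ← pow_mul,
    mul_left_comm (_ ^ (n - 2 * k)), ← mul_assoc, ← mul_pow, neg_one_mul, neg_neg, one_pow,
    one_mul, ← pow_add, Nat.sub_add_cancel hwn]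

/- At `(x, y) = (1, I)` all terms of the MacWilliams identity agree on either side, so that
`|S| * I ^ wt v = (1 + I) ^ n`. -/
lemma IsSinglyEvenSelfDual.wt_modEq_of_mem_shadow (hC : IsSinglyEvenSelfDual C)
    {v : Fin n → ZMod 2} (hv : v ∈ shadow C) : wt v ≡ n / 2 [MOD 4] := by
  classical
  have hmod {a b : ℕ} : Complex.I ^ a = Complex.I ^ b ↔ a ≡ b [MOD 4] := by
    rw [Complex.isPrimitiveRoot_I.eq_orderOf]
    exact (Complex.isPrimitiveRoot_I.isOfFinOrder four_ne_zero).pow_eq_pow_iff_modEq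
  have hS (w) (hw : w ∈ univ.filter (· ∈ shadow C)) :
      (1 : ℂ) ^ (n - wt w) * Complex.I ^ wt w = Complex.I ^ wt v := by
    rw [one_pow, one_mul, hmod]
    exact hC.wt_mod_four_eq_of_mem_shadow (mem_filter.1 hw).2 hv
  have hmw := macWilliams_shadow hC 1 Complex.I
  rw [sum_congr rfl hS, sum_congr rfl fun u _ =>
    neg_one_pow_mul_one_add_I_pow_mul_one_sub_I_pow (hC.1.two_dvd_wt u.2) (wt_le u.1), sum_const,
    sum_const, nsmul_eq_mul, nsmul_eq_mul, card_univ] at hmw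
  have hpow : (1 + Complex.I) ^ n = 2 ^ (n / 2) * Complex.I ^ (n / 2) := by
    rw [← mul_pow, ← Nat.mul_div_cancel' hC.1.two_dvd_length, pow_mul,
      Nat.mul_div_cancel_left _ two_pos]
    congr 1
    linear_combination Complex.I_sq
  have hI := mul_left_cancel₀ (Nat.cast_ne_zero.2 Fintype.card_ne_zero) (hpow ▸ hmw)
  have hnorm := congrArg norm hI
  simp only [norm_mul, norm_pow, Complex.norm_I, one_pow, mul_one, Complex.norm_natCast,
    Complex.norm_ofNat] at hnorm
  rw [← Complex.ofReal_natCast, hnorm, Complex.ofReal_pow, Complex.ofReal_ofNat] at hI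
  exact hmod.1 (mul_left_cancel₀ (pow_ne_zero _ two_ne_zero) hI)

end ShadowWeights

section DicksonPolynomials

open Polynomial

variable {R : Type*} [CommRing R]

/-- The Dickson polynomial of the first kind centred at `2`, so that its value at `z + z⁻¹ - 2` is
`z ^ l + z⁻¹ ^ l`. Unlike those of `Polynomial.dickson 1 1 l`, its coefficients are nonnegative. -/
noncomputable def shiftedDickson (R : Type*) [CommRing R] (l : ℕ) : R[X] :=
  (dickson 1 1 l).comp (X + 2)

lemma shiftedDickson_zero : shiftedDickson R 0 = C 2 := by
  rw [shiftedDickson, dickson_zero, map_ofNat]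
  norm_num

lemma shiftedDickson_one : shiftedDickson R 1 = X + C 2 := by
  rw [shiftedDickson, dickson_one, X_comp, map_ofNat]

lemma shiftedDickson_add_two (l : ℕ) : shiftedDickson R (l + 2) =
    (X + 2) * shiftedDickson R (l + 1) - shiftedDickson R l := by
  simp only [shiftedDickson, dickson_add_two, sub_comp, mul_comp, X_comp, map_one, one_mul]

lemma coeff_shiftedDickson_add_two (l j : ℕ) : (shiftedDickson R (l + 2)).coeff j =
    (X * shiftedDickson R (l + 1)).coeff j + 2 * (shiftedDickson R (l + 1)).coeff j
      - (shiftedDickson R l).coeff j := by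
  rw [shiftedDickson_add_two, coeff_sub, add_mul, coeff_add, coeff_ofNat_mul]

lemma aeval_shiftedDickson {A : Type*} [CommRing A] [Algebra R A] {z w : A} (hzw : z * w = 1)
    (l : ℕ) : aeval (z + w - 2) (shiftedDickson R l) = z ^ l + w ^ l := by
  rw [shiftedDickson, aeval_comp, map_add, aeval_X, map_ofNat, sub_add_cancel, aeval_def,
    eval₂_eq_eval_map, map_dickson, map_one, dickson_one_one_eval_add_inv z w hzw]

lemma aeval_shiftedDickson_eq_symmetrized_monomial {A : Type*} [CommRing A] [Algebra R A]
    {x y r : A} (hr : x * y * r = 1) (w l : ℕ) :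
    aeval (r ^ 4 * (x ^ 4 - y ^ 4) ^ 2) (shiftedDickson R l) =
      (x ^ (w + 8 * l) * y ^ w + x ^ w * y ^ (w + 8 * l)) * r ^ (w + 4 * l) := by
  have hzw : (x ^ 8 * r ^ 4) * (y ^ 8 * r ^ 4) = 1 := by
    linear_combination congrArg (· ^ 8) hr
  have harg : r ^ 4 * (x ^ 4 - y ^ 4) ^ 2 = x ^ 8 * r ^ 4 + y ^ 8 * r ^ 4 - 2 := by
    linear_combination (-2) * congrArg (· ^ 4) hr
  have hw : (x * y * r) ^ w = 1 := by rw [hr, one_pow]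
  rw [harg, aeval_shiftedDickson hzw]
  linear_combination (-(x ^ 8 * r ^ 4) ^ l - (y ^ 8 * r ^ 4) ^ l) * hw

lemma coeff_shiftedDickson_of_lt {l j : ℕ} (h : l < j) : (shiftedDickson R l).coeff j = 0 := by
  induction l using Nat.twoStepInduction generalizing j with
  | zero => rw [shiftedDickson_zero, coeff_C_of_ne_zero h.ne']
  | one =>
    rw [shiftedDickson_one, coeff_add, coeff_X_of_ne_one h.ne', coeff_C_of_ne_zero (by omega),
      add_zero]
  | more l ih₀ ih₁ =>
    obtain ⟨j, rfl⟩ := Nat.exists_eq_add_one.2 (Nat.zero_lt_of_lt h)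
    rw [coeff_shiftedDickson_add_two, coeff_X_mul, ih₁ (by omega), ih₁ (by omega),
      ih₀ (by omega), mul_zero, add_zero, sub_zero]

lemma coeff_self_shiftedDickson_succ (l : ℕ) : (shiftedDickson R (l + 1)).coeff (l + 1) = 1 := by
  induction l with
  | zero => rw [shiftedDickson_one, coeff_add, coeff_X_one, coeff_C_succ, add_zero]
  | succ l ih =>
    rw [coeff_shiftedDickson_add_two, coeff_X_mul, ih, coeff_shiftedDickson_of_lt (by omega),
      coeff_shiftedDickson_of_lt (by omega), mul_zero, add_zero, sub_zero]

variable [LinearOrder R] [IsStrictOrderedRing R]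

lemma coeff_shiftedDickson_nonneg_and_le_succ (l j : ℕ) : 0 ≤ (shiftedDickson R l).coeff j ∧
    (shiftedDickson R l).coeff j ≤ (shiftedDickson R (l + 1)).coeff j := by
  induction l generalizing j with
  | zero =>
    rw [shiftedDickson_zero, shiftedDickson_one, coeff_add, coeff_X, coeff_C]
    constructor <;> split_ifs <;> norm_num
  | succ l ih =>
    refine ⟨(ih j).1.trans (ih j).2, ?_⟩
    have hX : 0 ≤ (X * shiftedDickson R (l + 1)).coeff j := by
      rcases j with _ | j
      · rw [coeff_X_mul_zero]
      · exact (coeff_X_mul (shiftedDickson R (l + 1)) j).symm ▸ (ih j).1.trans (ih j).2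
    rw [coeff_shiftedDickson_add_two]
    linarith [(ih j).2]

lemma coeff_shiftedDickson_nonneg (l j : ℕ) : 0 ≤ (shiftedDickson R l).coeff j :=
  (coeff_shiftedDickson_nonneg_and_le_succ l j).1

lemma coeff_shiftedDickson_pos_iff {l j : ℕ} : 0 < (shiftedDickson R l).coeff j ↔ j ≤ l := by
  refine ⟨fun h => ?_, fun h => ?_⟩
  · by_contra! hlj
    exact h.ne' (coeff_shiftedDickson_of_lt hlj)
  · have hmono : Monotone fun l => (shiftedDickson R l).coeff j :=
      monotone_nat_of_le_succ fun l => (coeff_shiftedDickson_nonneg_and_le_succ l j).2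
    have hself : 0 < (shiftedDickson R j).coeff j := by
      rcases j with _ | j
      · rw [shiftedDickson_zero, coeff_C_zero]
        exact two_pos
      · rw [coeff_self_shiftedDickson_succ]
        exact one_pos
    exact hself.trans_le (hmono h)

end DicksonPolynomials

section GleasonIdentity

open PowerSeries

lemma powerSeries_expand_injective {R : Type*} [CommRing R] {p : ℕ} (hp : p ≠ 0) :
    Function.Injective (expand (R := R) p hp) := fun f g h => PowerSeries.ext fun m => by
  rw [← coeff_expand_mul p hp, h, coeff_expand_mul]

variable {n : ℕ} {C : Submodule (ZMod 2) (Fin n → ZMod 2)}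

open Classical in
/-- The polynomial `p` such that `2 * ∑ v ∈ S, x ^ (n - wt v) * y ^ wt v`, for `S` the shadow of
`C`, is `(x * y) ^ (n / 2) * p ((x ^ 4 - y ^ 4) ^ 2 / (x * y) ^ 4)`. -/
noncomputable def shadowPolynomial (C : Submodule (ZMod 2) (Fin n → ZMod 2)) : Polynomial ℚ :=
  ∑ v with v ∈ shadow C, shiftedDickson ℚ (Nat.dist (n / 2) (wt v) / 4)

/-- The weight enumerator of a self-dual code `C` with the codewords of weight `2` modulo `4`
counted with sign `-1`, in the variable whose exponent is half the weight. -/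
noncomputable def signedEnumerator (C : Submodule (ZMod 2) (Fin n → ZMod 2)) : ℚ⟦X⟧ :=
  open Classical in ∑ u : C, (-X) ^ (wt (u : Fin n → ZMod 2) / 2)

lemma symmetrized_monomial_mul_pow {A : Type*} [CommRing A] [Algebra ℚ A] {x y r : A}
    (hr : x * y * r = 1) {N w : ℕ} (hw : w ≤ 2 * N) (hmod : w ≡ N [MOD 4]) :
    (x ^ (2 * N - w) * y ^ w + x ^ w * y ^ (2 * N - w)) * r ^ N =
      Polynomial.aeval (r ^ 4 * (x ^ 4 - y ^ 4) ^ 2) (shiftedDickson ℚ (Nat.dist N w / 4)) := by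
  rcases le_total w N with h | h
  · obtain ⟨l, hl⟩ := (Nat.modEq_iff_dvd' h).1 hmod
    obtain rfl : N = w + 4 * l := by omega
    rw [Nat.dist_eq_sub_of_le_right h, hl, Nat.mul_div_cancel_left l four_pos,
      aeval_shiftedDickson_eq_symmetrized_monomial hr w,
      show 2 * (w + 4 * l) - w = w + 8 * l by omega]
  · obtain ⟨l, hl⟩ := (Nat.modEq_iff_dvd' h).1 hmod.symm
    obtain ⟨m, rfl⟩ : ∃ m, N = m + 4 * l := ⟨N - 4 * l, by omega⟩
    obtain rfl : w = m + 8 * l := by omega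
    rw [Nat.dist_eq_sub_of_le h, hl, Nat.mul_div_cancel_left l four_pos,
      aeval_shiftedDickson_eq_symmetrized_monomial hr m,
      show 2 * (m + 4 * l) - (m + 8 * l) = m by omega, add_comm (x ^ m * _)]

open Classical in
lemma IsSinglyEvenSelfDual.sum_shadow_reverse (hC : IsSinglyEvenSelfDual C) {M : Type*}
    [AddCommMonoid M] (f : ℕ → ℕ → M) :
    ∑ v with v ∈ shadow C, f (wt v) (n - wt v) = ∑ v with v ∈ shadow C, f (n - wt v) (wt v) := by
  have hwt (v : Fin n → ZMod 2) : n - wt v = wt (v + 1) ∧ n - wt (v + 1) = wt v := by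
    have := wt_add_one_add_wt v
    omega
  refine sum_nbij' (· + 1) (· + 1) (fun v hv => ?_) (fun v hv => ?_) ?_ ?_ ?_
  · simpa using hC.add_one_mem_shadow (mem_filter.1 hv).2
  · simpa using hC.add_one_mem_shadow (mem_filter.1 hv).2
  · intro v _
    rw [add_assoc, ZModModule.add_self, add_zero]
  · intro v _
    rw [add_assoc, ZModModule.add_self, add_zero]
  · intro v _
    rw [(hwt v).1, (hwt v).2]

open Classical in
theorem card_mul_aeval_shadowPolynomial {A : Type*} [CommRing A] [IsDomain A] [Algebra ℚ A]
    (hC : IsSinglyEvenSelfDual C) {x y r : A} (hr : x * y * r = 1) :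
    Fintype.card C * Polynomial.aeval (r ^ 4 * (x ^ 4 - y ^ 4) ^ 2) (shadowPolynomial C) =
      2 * r ^ (n / 2) * ∑ u : C, (-1) ^ (wt (u : Fin n → ZMod 2) / 2) *
        ((x + y) ^ (n - wt (u : Fin n → ZMod 2)) * (x - y) ^ wt (u : Fin n → ZMod 2)) := by
  have : CharZero A := algebraRat.charZero A
  have hN : 2 * (n / 2) = n := Nat.mul_div_cancel' hC.1.two_dvd_length
  have hterm (v) (hv : v ∈ univ.filter (· ∈ shadow C)) :
      Polynomial.aeval (r ^ 4 * (x ^ 4 - y ^ 4) ^ 2)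
        (shiftedDickson ℚ (Nat.dist (n / 2) (wt v) / 4)) =
      (x ^ (n - wt v) * y ^ wt v + x ^ wt v * y ^ (n - wt v)) * r ^ (n / 2) := by
    rw [← symmetrized_monomial_mul_pow hr (hN.symm ▸ wt_le v)
      (hC.wt_modEq_of_mem_shadow (mem_filter.1 hv).2), hN]
  rw [shadowPolynomial, map_sum, sum_congr rfl hterm, ← sum_mul, sum_add_distrib,
    hC.sum_shadow_reverse fun a b => x ^ a * y ^ b, ← macWilliams_shadow hC]
  ring

lemma IsSinglyEvenSelfDual.coeff_shadowPolynomial_eq_zero_iff (hC : IsSinglyEvenSelfDual C)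
    {j : ℕ} : (shadowPolynomial C).coeff j = 0 ↔ ∀ v ∈ shadow C, n / 2 < wt v + 4 * j := by
  classical
  have hterm {v : Fin n → ZMod 2} : (shiftedDickson ℚ (Nat.dist (n / 2) (wt v) / 4)).coeff j = 0 ↔
      n / 2 < wt v + 4 * j ∧ n / 2 < wt (v + 1) + 4 * j := by
    have hwt := wt_add_one_add_wt v
    have hN := hC.1.two_dvd_length
    rw [← not_iff_not, ← ne_eq, ← (coeff_shiftedDickson_nonneg _ _).lt_iff_ne',
      coeff_shiftedDickson_pos_iff, Nat.le_div_iff_mul_le four_pos, Nat.dist]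
    omega
  rw [shadowPolynomial, Polynomial.finsetSum_coeff,
    sum_eq_zero_iff_of_nonneg fun v _ => coeff_shiftedDickson_nonneg _ _]
  simp only [mem_filter, mem_univ, true_and, hterm]
  exact ⟨fun h v hv => (h v hv).1, fun h v hv => ⟨h v hv, h _ (hC.add_one_mem_shadow hv)⟩⟩

/-- The power series `g` for which `(x ^ 4 - y ^ 4) ^ 2 / (x * y) ^ 4` at `x = 1 + s`,
`y = 1 - s` is `t * g t`, where `t = s ^ 2`. -/
noncomputable def lagrangeKernel : ℚ⟦X⟧ := 64 * (1 + X) ^ 2 * (1 - X)⁻¹ ^ 4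

lemma neg_one_pow_mul_pow_one_add_X_one_sub_X {R : Type*} [CommRing R] {n w : ℕ} (hw : 2 ∣ w)
    (hwn : w ≤ n) :
    (-1 : R⟦X⟧) ^ (w / 2) * ((1 + X + (1 - X)) ^ (n - w) * (1 + X - (1 - X)) ^ w) =
      expand 2 two_ne_zero (2 ^ n * (-X) ^ (w / 2)) := by
  obtain ⟨k, rfl⟩ := hw
  obtain ⟨m, rfl⟩ := Nat.exists_eq_add_of_le hwn
  rw [Nat.add_sub_cancel_left, Nat.mul_div_cancel_left k two_pos, map_mul, map_pow, map_pow,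
    map_neg, map_ofNat, expand_X]
  ring

open Classical in
theorem IsSinglyEvenSelfDual.card_mul_aeval_lagrangeKernel (hC : IsSinglyEvenSelfDual C) :
    Fintype.card C * Polynomial.aeval (X * lagrangeKernel) (shadowPolynomial C) =
      2 ^ (n + 1) * (1 - X)⁻¹ ^ (n / 2) * signedEnumerator C := by
  set r : ℚ⟦X⟧ := expand 2 two_ne_zero (1 - X)⁻¹ with hr
  have hr_inv : (1 + X) * (1 - X) * r = 1 := by
    have h := congrArg (expand 2 two_ne_zero) (one_sub_X_mul_inv (K := ℚ))
    rw [map_mul, map_sub, map_one, expand_X, ← hr] at h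
    linear_combination h
  have harg : r ^ 4 * ((1 + X) ^ 4 - (1 - X) ^ 4) ^ 2
      = expand 2 two_ne_zero (X * lagrangeKernel) := by
    simp only [lagrangeKernel, map_mul, map_pow, map_add, map_one, map_ofNat, expand_X, ← hr]
    ring
  have h := card_mul_aeval_shadowPolynomial hC hr_inv
  rw [sum_congr rfl fun u _ => neg_one_pow_mul_pow_one_add_X_one_sub_X (hC.1.two_dvd_wt u.2)
    (wt_le u.1), harg, Polynomial.aeval_algHom_apply, ← map_sum, ← mul_sum] at h
  refine powerSeries_expand_injective two_ne_zero ?_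
  rw [map_mul, map_natCast, h, ← signedEnumerator, hr]
  simp only [map_mul, map_pow, map_ofNat]
  ring

end GleasonIdentity

section ShadowBound

open PowerSeries

variable {n i k : ℕ} {C : Submodule (ZMod 2) (Fin n → ZMod 2)}

lemma X_pow_dvd_signedEnumerator_sub_one (hi : 2 * i ≤ minWt C) :
    X ^ i ∣ signedEnumerator C - 1 := by
  classical
  have hzero : wt ((0 : C) : Fin n → ZMod 2) = 0 := hammingNorm_zero
  rw [signedEnumerator, ← add_sum_erase univ _ (mem_univ 0), hzero, Nat.zero_div, pow_zero,
    add_sub_cancel_left]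
  refine dvd_sum fun u hu => ?_
  have hu₀ : (u : Fin n → ZMod 2) ≠ 0 := Submodule.coe_eq_zero.not.2 (mem_erase.1 hu).1
  have hwt : i ≤ wt (u : Fin n → ZMod 2) / 2 := by
    have := minWtSet_le u.2 hu₀
    rw [minWt] at hi
    omega
  exact (pow_dvd_pow X hwt).trans (pow_dvd_pow_of_dvd (dvd_neg.2 dvd_rfl) _)

lemma constantCoeff_lagrangeKernel : constantCoeff lagrangeKernel = 64 := by
  have h64 : constantCoeff (64 : ℚ⟦X⟧) = 64 := map_ofNat constantCoeff 64
  simp [lagrangeKernel, h64]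

lemma lagrangeKernel_inv :
    lagrangeKernel⁻¹ = PowerSeries.C (64⁻¹ : ℚ) * ((1 - X) ^ 4 * (1 + X)⁻¹ ^ 2) := by
  have h64 : PowerSeries.C (64⁻¹ : ℚ) * 64 = 1 := by
    rw [← map_ofNat PowerSeries.C, ← map_mul, inv_mul_cancel₀ (by norm_num), map_one]
  refine (inv_eq_iff_mul_eq_one (by simp [constantCoeff_lagrangeKernel])).2 ?_
  calc PowerSeries.C (64⁻¹ : ℚ) * ((1 - X) ^ 4 * (1 + X)⁻¹ ^ 2) * lagrangeKernel
      = PowerSeries.C (64⁻¹ : ℚ) * 64 * ((1 - X) * (1 - X)⁻¹) ^ 4 * ((1 + X) * (1 + X)⁻¹) ^ 2 := by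
        rw [lagrangeKernel]
        ring
    _ = 1 := by
        rw [h64, one_sub_X_mul_inv, one_add_X_mul_inv, one_pow, one_pow, mul_one, mul_one]

lemma derivative_one_sub_X_inv_pow {K : Type*} [Field K] (m : ℕ) :
    d⁄dX K ((1 - X : K⟦X⟧)⁻¹ ^ m) = m * (1 - X)⁻¹ ^ (m + 1) := by
  rcases m with _ | m
  · simp
  · rw [derivative_pow, derivative_inv', map_sub, Derivation.map_one_eq_zero, derivative_X,
      Nat.add_sub_cancel]
    ring

lemma coeff_derivative_one_sub_X_inv_pow_mul_lagrangeKernel_inv_pow (m k : ℕ) :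
    coeff k (d⁄dX ℚ ((1 - X)⁻¹ ^ m) * lagrangeKernel⁻¹ ^ (k + 1)) = m * 64⁻¹ ^ (k + 1) *
      coeff k ((1 - X) ^ (4 * (k + 1)) * (1 - X)⁻¹ ^ (m + 1) * (1 + X)⁻¹ ^ (2 * (k + 1))) := by
  rw [← coeff_C_mul, derivative_one_sub_X_inv_pow, lagrangeKernel_inv, map_mul PowerSeries.C,
    map_natCast, map_pow, mul_pow, mul_pow, ← pow_mul, ← pow_mul]
  ring_nf

open Classical in
lemma IsSinglyEvenSelfDual.card_mul_coeff_succ_shadowPolynomial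
    (hC : IsSinglyEvenSelfDual C) (hk : 2 * (k + 2) ≤ minWt C) :
    Fintype.card C * ((k + 1) * (shadowPolynomial C).coeff (k + 1)) =
      2 ^ (n + 1) * (((n / 2 : ℕ) : ℚ) * 64⁻¹ ^ (k + 1) *
        coeff k ((1 - X) ^ (4 * (k + 1)) * (1 - X)⁻¹ ^ (n / 2 + 1) *
          (1 + X)⁻¹ ^ (2 * (k + 1)))) := by
  have hsplit : (Fintype.card C : ℚ) • Polynomial.aeval (X * lagrangeKernel) (shadowPolynomial C) =
      (2 ^ (n + 1) : ℚ) •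
        ((1 - X)⁻¹ ^ (n / 2) + (signedEnumerator C - 1) * (1 - X)⁻¹ ^ (n / 2)) := by
    rw [Algebra.smul_def, Algebra.smul_def, map_natCast, map_pow, map_ofNat,
      hC.card_mul_aeval_lagrangeKernel]
    ring
  have hcoeff := congrArg (fun f => coeff k (d⁄dX ℚ f * lagrangeKernel⁻¹ ^ (k + 1))) hsplit
  have hK : constantCoeff lagrangeKernel ≠ 0 := by norm_num [constantCoeff_lagrangeKernel]
  have herror := coeff_derivative_mul_eq_zero_of_X_pow_dvd
    ((X_pow_dvd_signedEnumerator_sub_one hk).mul_right ((1 - X)⁻¹ ^ (n / 2)))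
    (lagrangeKernel⁻¹ ^ (k + 1))
  simpa only [Derivation.map_smul, smul_mul_assoc, map_smul, smul_eq_mul, map_add, add_mul, herror,
    coeff_derivative_aeval_mul_inv_pow hK, add_zero,
    coeff_derivative_one_sub_X_inv_pow_mul_lagrangeKernel_inv_pow] using hcoeff

lemma IsSinglyEvenSelfDual.coeff_succ_shadowPolynomial_eq_zero_iff
    (hC : IsSinglyEvenSelfDual C) (hk : 2 * (k + 2) ≤ minWt C) :
    (shadowPolynomial C).coeff (k + 1) = 0 ↔ n / 2 + 1 = 6 * (k + 1) ∧ Odd k := by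
  classical
  have hN : n / 2 ≠ 0 := by
    have := hC.length_pos
    have := hC.1.two_dvd_length
    omega
  have hcard : (Fintype.card C : ℚ) ≠ 0 := Nat.cast_ne_zero.2 Fintype.card_ne_zero
  have hlhs := mul_eq_zero_iff_left (b := (shadowPolynomial C).coeff (k + 1))
    (mul_ne_zero hcard (Nat.cast_add_one_ne_zero (R := ℚ) k))
  have hscale : (2 ^ (n + 1) * ((n / 2 : ℕ) * 64⁻¹ ^ (k + 1)) : ℚ) ≠ 0 := by positivity
  rw [← hlhs, mul_assoc, hC.card_mul_coeff_succ_shadowPolynomial hk, ← mul_assoc,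
    mul_eq_zero_iff_left hscale]
  exact (coeff_one_sub_X_pow_mul_inv_pow_eq_zero_iff _ _ (2 * k + 1) k).trans
    (and_congr_left' (by omega))

lemma IsSinglyEvenSelfDual.coeff_zero_shadowPolynomial_ne_zero
    (hC : IsSinglyEvenSelfDual C) (hd : 2 ≤ minWt C) : (shadowPolynomial C).coeff 0 ≠ 0 := by
  classical
  have hW : constantCoeff (signedEnumerator C) = 1 := by
    have h := X_dvd_iff.1 (pow_one (X : ℚ⟦X⟧) ▸ X_pow_dvd_signedEnumerator_sub_one (i := 1) hd)
    rwa [map_sub, map_one, sub_eq_zero] at h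
  intro h₀
  obtain ⟨p, hp⟩ := Polynomial.X_dvd_iff.2 h₀
  have h := congrArg constantCoeff hC.card_mul_aeval_lagrangeKernel
  rw [hp, map_mul (Polynomial.aeval _), Polynomial.aeval_X] at h
  have h₂ : constantCoeff (2 : ℚ⟦X⟧) = 2 := map_ofNat constantCoeff 2
  refine pow_ne_zero (n + 1) two_ne_zero (M₀ := ℚ) ?_
  simpa [hW, h₂] using h.symm

theorem IsSinglyEvenSelfDual.exists_mem_shadow_iff (hC : IsSinglyEvenSelfDual C)
    (hi : 2 * (i + 1) ≤ minWt C) :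
    (∃ v ∈ shadow C, wt v + 4 * i ≤ n / 2) ↔ ¬(n / 2 + 1 = 6 * i ∧ Even i) := by
  rw [← not_iff_not, not_not]
  push Not
  rw [← hC.coeff_shadowPolynomial_eq_zero_iff]
  rcases i with _ | k
  · exact iff_of_false (hC.coeff_zero_shadowPolynomial_ne_zero hi) (by omega)
  · rw [hC.coeff_succ_shadowPolynomial_eq_zero_iff hi, Nat.even_add_one, Nat.not_even_iff_odd]

lemma IsSinglyEvenSelfDual.exists_minWt_eq (hC : IsSinglyEvenSelfDual C) :
    ∃ j, minWt C = 2 * (j + 1) := by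
  obtain ⟨x, hx, hx₄⟩ := hC.2
  obtain ⟨u, hu, hu₀, hwt⟩ := exists_wt_eq_minWtSet hx (by rintro rfl; simp [wt] at hx₄)
  obtain ⟨j, hj⟩ := hC.1.two_dvd_wt hu
  have hpos : 0 < wt u := hammingNorm_pos_iff.2 hu₀
  refine ⟨j - 1, ?_⟩
  rw [minWt, ← hwt]
  omega

lemma IsSinglyEvenSelfDual.exists_mem_shadow_wt_eq (hC : IsSinglyEvenSelfDual C) :
    ∃ v ∈ shadow C, wt v = minWtSet (shadow C) := by
  obtain ⟨j, hj⟩ := hC.exists_minWt_eq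
  obtain ⟨v, hv, -⟩ := (hC.exists_mem_shadow_iff (i := 0) (by omega)).2 (by omega)
  obtain ⟨w, hw, -, hwt⟩ := exists_wt_eq_minWtSet hv (ne_zero_of_mem_shadow hv)
  exact ⟨w, hw, hwt⟩

theorem IsSinglyEvenSelfDual.minWtSet_shadow_modEq (hC : IsSinglyEvenSelfDual C) :
    minWtSet (shadow C) ≡ n / 2 [MOD 4] := by
  obtain ⟨v, hv, hwt⟩ := hC.exists_mem_shadow_wt_eq
  exact hwt ▸ hC.wt_modEq_of_mem_shadow hv

theorem IsSinglyEvenSelfDual.minWtSet_shadow_add_le_iff (hC : IsSinglyEvenSelfDual C)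
    (hi : 2 * (i + 1) ≤ minWt C) :
    minWtSet (shadow C) + 4 * i ≤ n / 2 ↔ ¬(n / 2 + 1 = 6 * i ∧ Even i) := by
  obtain ⟨w, hw, hwt⟩ := hC.exists_mem_shadow_wt_eq
  rw [← hC.exists_mem_shadow_iff hi]
  refine ⟨fun h => ⟨w, hw, hwt ▸ h⟩, fun ⟨v, hv, h⟩ => ?_⟩
  exact (Nat.add_le_add_right (minWtSet_le hv (ne_zero_of_mem_shadow hv)) _).trans h

end ShadowBound

/-- The Bachoc–Gaborit bound: for a singly even self-dual code `C` of length `n` with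
shadow `S`, one has `d(S) ≤ n/2 + 4 - 2 d(C)` unless `n ≡ 22 (mod 24)` and
`d(C) = 4⌊n/24⌋ + 6`, in which case `d(S) = n/2 + 8 - 2 d(C)`. -/
theorem shadow_bound (n : ℕ) (C : Submodule (ZMod 2) (Fin n → ZMod 2))
    (hse : IsSinglyEvenSelfDual C) :
    (¬ (n % 24 = 22 ∧ minWt C = 4 * (n / 24) + 6) →
      (minWtSet (shadow C) : ℤ) ≤ ((n / 2 : ℕ) : ℤ) + 4 - 2 * (minWt C : ℤ)) ∧
    ((n % 24 = 22 ∧ minWt C = 4 * (n / 24) + 6) →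
      (minWtSet (shadow C) : ℤ) = ((n / 2 : ℕ) : ℤ) + 8 - 2 * (minWt C : ℤ)) := by
  have heven := hse.1.two_dvd_length
  constructor
  · intro hne
    obtain ⟨i, hi⟩ := hse.exists_minWt_eq
    have hle : minWtSet (shadow C) + 4 * i ≤ n / 2 := by
      refine (hse.minWtSet_shadow_add_le_iff hi.ge).2 ?_
      rintro ⟨hlength, r, hr⟩
      exact hne (by omega)
    omega
  · rintro ⟨hmod, hd⟩
    obtain ⟨m, hm⟩ : ∃ m, n = 24 * m + 22 := ⟨n / 24, by omega⟩
    have hle : minWtSet (shadow C) + 4 * (2 * m + 1) ≤ n / 2 :=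
      (hse.minWtSet_shadow_add_le_iff (by omega)).2 fun h => by omega
    have hnot : ¬ minWtSet (shadow C) + 4 * (2 * (m + 1)) ≤ n / 2 :=
      mt (hse.minWtSet_shadow_add_le_iff (by omega)).1
        (not_not.2 ⟨by omega, even_two_mul (m + 1)⟩)
    have hshadow : minWtSet (shadow C) % 4 = n / 2 % 4 := hse.minWtSet_shadow_modEq
    omega
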